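/- In the tadpole graph with cycle of even length k, let v be the far endpoint of the pendant path and let v' be the cycle vertex farthest from v. Then for any cycle vertex w at distance l from v' (along the cycle), the hitting time from w to v equals h_{v'v} - l^2. -/

import Mathlib

open scoped Classical

/-- Transition probability of the simple random walk on `G`. -/
noncomputable def stepProb {V : Type*} [Fintype V] (G : SimpleGraph V) (a b : V) : ℝ :=
  if G.Adj a b then 1 / (G.degree a) else 0

/-- Probability that the simple random walk started at `u` follows the step sequence `w`. -/
noncomputable def walkProb {V : Type*} [Fintype V] (G : SimpleGraph V) :
    (u : V) → {n : ℕ} → (Fin n → V) → ℝ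
  | _, 0, _ => 1
  | u, n + 1, w => stepProb G u (w 0) * walkProb G (w 0) (fun i : Fin n => w i.succ)

/-- Probability that the walk started at `u` first reaches `v` at time exactly `n` (for `n ≥ 1`). -/
noncomputable def firstHitProb {V : Type*} [Fintype V] (G : SimpleGraph V) (u v : V) (n : ℕ) : ℝ :=
  ∑ w ∈ Finset.univ.filter (fun w : Fin n → V =>
      (∀ i : Fin n, (i : ℕ) + 1 < n → w i ≠ v) ∧ ∀ i : Fin n, (i : ℕ) + 1 = n → w i = v),
    walkProb G u w

/-- Expected hitting time of `v` for the simple random walk on `G` started at `u`. -/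
noncomputable def hittingTime {V : Type*} [Fintype V] (G : SimpleGraph V) (u v : V) : ℝ :=
  if u = v then 0 else ∑' n : ℕ, (n : ℝ) * firstHitProb G u v n

/-- Expected first return time to `v` of the simple random walk on `G` started at `v`. -/
noncomputable def expectedReturnTime {V : Type*} [Fintype V] (G : SimpleGraph V) (v : V) : ℝ :=
  ∑' n : ℕ, (n : ℝ) * firstHitProb G v v n
/-- The tadpole graph: a cycle on `k` vertices (`Sum.inl`) together with a pendant path
on `l` additional vertices (`Sum.inr`), attached to cycle vertex `0`; path vertex `j` is at
distance `j + 1` from the cycle, so `Sum.inr ⟨l-1,_⟩` is the far endpoint of the path. -/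
def tadpole (k l : ℕ) : SimpleGraph (Fin k ⊕ Fin l) :=
  SimpleGraph.fromRel (fun x y =>
    match x, y with
    | Sum.inl i, Sum.inl j => ((i : ℕ) + 1) % k = (j : ℕ)
    | Sum.inl i, Sum.inr j => (i : ℕ) = 0 ∧ (j : ℕ) = 0
    | Sum.inr i, Sum.inr j => (i : ℕ) + 1 = (j : ℕ)
    | Sum.inr _, Sum.inl _ => False)

/-!
Killing the walk on a graph `G` at `v` leaves a substochastic matrix `K` on the other vertices, and
the walk started at `u` avoids `v` for `n` steps with probability `(K ^ n *ᵥ 1) u`. Summing these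
tails gives the hitting time, so any nonnegative solution of `h = 1 + K *ᵥ h` is the hitting time:
iterating the equation gives `h = ∑ n < N, K ^ n *ᵥ 1 + K ^ N *ᵥ h`, and the remainder, at most a
multiple of the `N`-th tail, vanishes. On the tadpole the solution is explicit: at cycle vertex `i`
it is `i * (k - i)` plus a constant, and `(k / 2 ± j) * (k / 2 ∓ j) = (k / 2) ^ 2 - j ^ 2`.
-/

open Filter Finset Matrix Topology

section Series

variable {f : ℕ → ℝ}

lemma tendsto_natCast_mul_of_antitone_of_summable (hf : Antitone f) (hs : Summable f) :
    Tendsto (fun n : ℕ ↦ n * f n) atTop (𝓝 0) := by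
  have hf_nonneg : ∀ n, 0 ≤ f n := hf.le_of_tendsto hs.tendsto_atTop_zero
  have hpartial := hs.hasSum.tendsto_sum_nat
  have hblock : Tendsto (fun n ↦ 2 * (∑ i ∈ range n, f i - ∑ i ∈ range (n / 2), f i)) atTop
      (𝓝 0) := by
    simpa using
      (hpartial.sub (hpartial.comp (Nat.tendsto_div_const_atTop two_ne_zero))).const_mul 2
  refine squeeze_zero (fun n ↦ mul_nonneg n.cast_nonneg (hf_nonneg n)) (fun n ↦ ?_) hblock
  calc (n : ℝ) * f n ≤ (2 * (n - n / 2 : ℕ)) * f n := by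
        refine mul_le_mul_of_nonneg_right ?_ (hf_nonneg n)
        exact_mod_cast (by omega : n ≤ 2 * (n - n / 2))
    _ = 2 * ∑ _i ∈ Ico (n / 2) n, f n := by simp [mul_assoc]
    _ ≤ 2 * ∑ i ∈ Ico (n / 2) n, f i := by
        gcongr with i hi
        exact hf (mem_Ico.1 hi).2.le
    _ = 2 * (∑ i ∈ range n, f i - ∑ i ∈ range (n / 2), f i) := by
        rw [sum_Ico_eq_sub _ (Nat.div_le_self n 2)]

lemma hasSum_succ_mul_sub_of_antitone {a : ℝ} (hf : Antitone f) (hs : HasSum f a) :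
    HasSum (fun n : ℕ ↦ ((n : ℝ) + 1) * (f n - f (n + 1))) a := by
  have hparts (N : ℕ) : ∑ n ∈ range N, ((n : ℝ) + 1) * (f n - f (n + 1)) =
      ∑ n ∈ range N, f n - N * f N := by
    induction N with
    | zero => simp
    | succ N ih =>
      rw [sum_range_succ, ih, sum_range_succ]
      push_cast
      ring
  rw [hasSum_iff_tendsto_nat_of_nonneg fun n ↦
    mul_nonneg (by positivity) (sub_nonneg.2 (hf n.le_succ))]
  simp only [hparts]
  simpa using hs.tendsto_sum_nat.sub (tendsto_natCast_mul_of_antitone_of_summable hf hs.summable)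

end Series

section NonnegativeMatrix

variable {ι : Type*} [Fintype ι] [DecidableEq ι]

lemma sum_range_pow_mulVec_add_pow_mulVec {R : Type*} [Semiring R] {K : Matrix ι ι R}
    {g h : ι → R} (hh : h = g + K *ᵥ h) (N : ℕ) :
    ∑ n ∈ range N, K ^ n *ᵥ g + K ^ N *ᵥ h = h := by
  induction N with
  | zero => simp
  | succ N ih =>
    have hstep : K ^ N *ᵥ h = K ^ N *ᵥ g + K ^ (N + 1) *ᵥ h := by
      conv_lhs => rw [hh]
      rw [mulVec_add, mulVec_mulVec, pow_succ]
    rw [sum_range_succ, add_assoc, ← hstep, ih]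

lemma hasSum_pow_mulVec_one {K : Matrix ι ι ℝ} (hK : ∀ i j, 0 ≤ K i j) {h : ι → ℝ}
    (h_nonneg : 0 ≤ h) (hh : h = 1 + K *ᵥ h) (i : ι) : HasSum (fun n ↦ (K ^ n *ᵥ 1) i) (h i) := by
  have hmono (n : ℕ) {x y : ι → ℝ} (hxy : x ≤ y) : (K ^ n *ᵥ x) i ≤ (K ^ n *ᵥ y) i :=
    dotProduct_le_dotProduct_of_nonneg_left hxy (pow_apply_nonneg hK n i)
  have hpow_nonneg (n : ℕ) {x : ι → ℝ} (hx : 0 ≤ x) : 0 ≤ (K ^ n *ᵥ x) i := by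
    simpa using hmono n hx
  have hsplit (N : ℕ) : ∑ n ∈ range N, (K ^ n *ᵥ 1) i + (K ^ N *ᵥ h) i = h i := by
    simpa using congrFun (sum_range_pow_mulVec_add_pow_mulVec hh N) i
  have hsummable : Summable fun n ↦ (K ^ n *ᵥ 1) i :=
    summable_of_sum_range_le (fun n ↦ hpow_nonneg n zero_le_one) fun N ↦
      (le_add_of_nonneg_right (hpow_nonneg N h_nonneg)).trans (hsplit N).le
  have hbound : h ≤ (∑ j, h j) • (1 : ι → ℝ) := fun j ↦ by
    simpa using single_le_sum (fun j _ ↦ h_nonneg j) (mem_univ j)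
  have hremainder : Tendsto (fun N ↦ (K ^ N *ᵥ h) i) atTop (𝓝 0) := by
    refine squeeze_zero (fun N ↦ hpow_nonneg N h_nonneg) (fun N ↦ hmono N hbound) ?_
    simpa [mulVec_smul] using hsummable.tendsto_atTop_zero.const_mul (∑ j, h j)
  rw [hsummable.hasSum_iff_tendsto_nat]
  simpa only [← eq_sub_iff_add_eq.2 (hsplit _), sub_zero] using hremainder.const_sub (h i)

end NonnegativeMatrix

section HittingTime

variable {V : Type*} [Fintype V] (G : SimpleGraph V)

lemma stepProb_nonneg (a b : V) : 0 ≤ stepProb G a b := by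
  unfold stepProb
  positivity

lemma walkProb_nonneg {n : ℕ} (u : V) (w : Fin n → V) : 0 ≤ walkProb G u w := by
  induction n generalizing u with
  | zero => exact zero_le_one
  | succ n ih => exact mul_nonneg (stepProb_nonneg G _ _) (ih _ _)

lemma firstHitProb_nonneg (u v : V) (n : ℕ) : 0 ≤ firstHitProb G u v n :=
  sum_nonneg fun w _ ↦ walkProb_nonneg G u w

lemma sum_stepProb_mul (u : V) (f : V → ℝ) :
    ∑ b, stepProb G u b * f b = (∑ b ∈ G.neighborFinset u, f b) / G.degree u := by
  simp only [stepProb, ite_mul, zero_mul, ← SimpleGraph.mem_neighborFinset, sum_ite_mem,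
    univ_inter, sum_div, one_div_mul_eq_div]

lemma firstHitProb_one (u v : V) : firstHitProb G u v 1 = stepProb G u v := by
  have hpaths : univ.filter (fun w : Fin 1 → V ↦ (∀ i : Fin 1, (i : ℕ) + 1 < 1 → w i ≠ v) ∧
      ∀ i : Fin 1, (i : ℕ) + 1 = 1 → w i = v) = {fun _ ↦ v} := by
    ext w
    simp [funext_iff]
  rw [firstHitProb, hpaths, sum_singleton]
  simp [walkProb]

lemma firstHitProb_add_two (u v : V) (n : ℕ) :
    firstHitProb G u v (n + 2) =
      ∑ b : {b // b ≠ v}, stepProb G u b * firstHitProb G b v (n + 1) := by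
  have hcons (b : V) (w : Fin (n + 1) → V) :
      ((∀ i : Fin (n + 2), (i : ℕ) + 1 < n + 2 → (Fin.cons b w : Fin (n + 2) → V) i ≠ v) ∧
        ∀ i : Fin (n + 2), (i : ℕ) + 1 = n + 2 → (Fin.cons b w : Fin (n + 2) → V) i = v) ↔
      b ≠ v ∧ (∀ i : Fin (n + 1), (i : ℕ) + 1 < n + 1 → w i ≠ v) ∧
        ∀ i : Fin (n + 1), (i : ℕ) + 1 = n + 1 → w i = v := by
    simp [Fin.forall_fin_succ (n := n + 1), and_assoc]
  simp only [firstHitProb, sum_filter, mul_sum]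
  rw [← (Fin.consEquiv (fun _ : Fin (n + 2) ↦ V)).sum_comp, Fintype.sum_prod_type,
    Fintype.sum_eq_add_sum_subtype_ne _ v]
  simp only [Fin.consEquiv, Equiv.coe_fn_mk, hcons, ne_eq, not_true_eq_false, false_and, if_false,
    sum_const_zero, zero_add]
  refine sum_congr rfl fun b _ ↦ sum_congr rfl fun w _ ↦ ?_
  simp [b.2, walkProb]

/-- The transition matrix of the simple random walk on `G` killed at `v`: its `n`-th power gives the
`n`-step transition probabilities along walks avoiding `v`. -/
noncomputable def killedMatrix (v : V) : Matrix {u // u ≠ v} {u // u ≠ v} ℝ :=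
  of fun a b ↦ stepProb G a b

variable {G} {v : V}

lemma firstHitProb_succ (n : ℕ) (u : {u // u ≠ v}) :
    firstHitProb G u v (n + 1) = (killedMatrix G v ^ n *ᵥ fun a ↦ stepProb G a v) u := by
  induction n generalizing u with
  | zero => simp [firstHitProb_one]
  | succ n ih =>
    rw [firstHitProb_add_two, pow_succ', ← mulVec_mulVec]
    exact sum_congr rfl fun b _ ↦ congrArg _ (ih b)

lemma killedMatrix_mulVec_apply {f : V → ℝ} (hf : f v = 0) (u : {u // u ≠ v}) :
    (killedMatrix G v *ᵥ fun b ↦ f b) u = (∑ b ∈ G.neighborFinset u, f b) / G.degree (u : V) := by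
  rw [← sum_stepProb_mul, Fintype.sum_eq_add_sum_subtype_ne _ v, hf, mul_zero, zero_add]
  rfl

lemma stepProb_add_killedMatrix_mulVec_one (hG : ∀ u ≠ v, 0 < G.degree u) :
    (fun a : {u // u ≠ v} ↦ stepProb G a v) + killedMatrix G v *ᵥ 1 = 1 := by
  ext u
  have hdeg : (G.degree (u : V) : ℝ) ≠ 0 := by exact_mod_cast (hG u u.2).ne'
  have hrow : ∑ b, stepProb G u b = 1 := by
    simpa [hdeg] using sum_stepProb_mul G u 1
  rw [Fintype.sum_eq_add_sum_subtype_ne _ v] at hrow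
  simpa [killedMatrix, mulVec, dotProduct] using hrow

lemma firstHitProb_succ_eq_sub (hG : ∀ u ≠ v, 0 < G.degree u) (n : ℕ) (u : {u // u ≠ v}) :
    firstHitProb G u v (n + 1) =
      (killedMatrix G v ^ n *ᵥ 1) u - (killedMatrix G v ^ (n + 1) *ᵥ 1) u := by
  rw [firstHitProb_succ, eq_sub_iff_add_eq, pow_succ, ← mulVec_mulVec, ← Pi.add_apply,
    ← mulVec_add, stepProb_add_killedMatrix_mulVec_one hG]

lemma hittingTime_eq_of_hasSum (hG : ∀ u ≠ v, 0 < G.degree u) {u : {u // u ≠ v}} {t : ℝ}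
    (ht : HasSum (fun n ↦ (killedMatrix G v ^ n *ᵥ 1) u) t) : hittingTime G u v = t := by
  have hanti : Antitone fun n ↦ (killedMatrix G v ^ n *ᵥ 1) u :=
    antitone_nat_of_succ_le fun n ↦ by
      rw [← sub_nonneg, ← firstHitProb_succ_eq_sub hG]
      exact firstHitProb_nonneg G u v (n + 1)
  have hshift : HasSum (fun n : ℕ ↦ ((n + 1 : ℕ) : ℝ) * firstHitProb G u v (n + 1)) t := by
    simpa only [firstHitProb_succ_eq_sub hG, Nat.cast_add_one] using
      hasSum_succ_mul_sub_of_antitone hanti ht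
  have hsum := (hasSum_nat_add_iff (f := fun n : ℕ ↦ (n : ℝ) * firstHitProb G u v n) 1).1 hshift
  rw [hittingTime, if_neg u.2]
  simpa using hsum.tsum_eq

theorem hittingTime_eq_of_sum_sub_eq_degree (hG : ∀ u ≠ v, 0 < G.degree u) {H : V → ℝ}
    (hH_nonneg : 0 ≤ H) (hv : H v = 0)
    (hH : ∀ u ≠ v, ∑ b ∈ G.neighborFinset u, (H u - H b) = G.degree u) (u : V) :
    hittingTime G u v = H u := by
  obtain rfl | hu := eq_or_ne u v
  · rw [hittingTime, if_pos rfl, hv]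
  have hfix : (fun a : {u // u ≠ v} ↦ H a) = 1 + killedMatrix G v *ᵥ fun a ↦ H a := by
    ext a
    have hdeg : (G.degree (a : V) : ℝ) ≠ 0 := by exact_mod_cast (hG a a.2).ne'
    have hsum := hH a a.2
    rw [sum_sub_distrib, sum_const, SimpleGraph.card_neighborFinset_eq_degree,
      nsmul_eq_mul] at hsum
    rw [Pi.add_apply, Pi.one_apply, killedMatrix_mulVec_apply hv]
    field_simp
    linarith
  exact hittingTime_eq_of_hasSum (u := ⟨u, hu⟩) hG <|
    hasSum_pow_mulVec_one (K := killedMatrix G v) (fun a b ↦ stepProb_nonneg G a b)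
      (fun a ↦ hH_nonneg a) hfix ⟨u, hu⟩

end HittingTime

section Tadpole

variable {k l : ℕ}

lemma tadpole_adj_inl_inl {i j : Fin k} :
    (tadpole k l).Adj (Sum.inl i) (Sum.inl j) ↔
      (i : ℕ) ≠ j ∧ (((i : ℕ) + 1) % k = j ∨ ((j : ℕ) + 1) % k = i) := by
  simp [tadpole, Fin.ext_iff]

lemma tadpole_adj_inr_inr {p q : Fin l} :
    (tadpole k l).Adj (Sum.inr p) (Sum.inr q) ↔ (p : ℕ) + 1 = q ∨ (q : ℕ) + 1 = p := by
  simp only [tadpole, SimpleGraph.fromRel_adj, ne_eq, Sum.inr.injEq, Fin.ext_iff]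
  omega

lemma tadpole_adj_inl_inr {i : Fin k} {p : Fin l} :
    (tadpole k l).Adj (Sum.inl i) (Sum.inr p) ↔ (i : ℕ) = 0 ∧ (p : ℕ) = 0 := by
  simp [tadpole]

lemma tadpole_degree_pos (hk : 0 < k) (hl : 0 < l) (u : Fin k ⊕ Fin l) :
    0 < (tadpole k l).degree u := by
  rw [SimpleGraph.degree_pos_iff_exists_adj]
  rcases u with ⟨_ | i, hi⟩ | ⟨_ | p, hp⟩
  · exact ⟨Sum.inr ⟨0, hl⟩, tadpole_adj_inl_inr.2 ⟨rfl, rfl⟩⟩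
  · exact ⟨Sum.inl ⟨i, by omega⟩, by simp [tadpole_adj_inl_inl, Nat.mod_eq_of_lt hi]⟩
  · exact ⟨Sum.inl ⟨0, hk⟩, (tadpole_adj_inl_inr.2 ⟨rfl, rfl⟩).symm⟩
  · exact ⟨Sum.inr ⟨p, by omega⟩, tadpole_adj_inr_inr.2 (Or.inr rfl)⟩

lemma add_one_mod_eq_ite {k i : ℕ} (h : i < k) : (i + 1) % k = if i + 1 = k then 0 else i + 1 := by
  split_ifs with hik
  · rw [hik, Nat.mod_self]
  · exact Nat.mod_eq_of_lt (by omega)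

lemma neighborFinset_tadpole_inl_zero (hk : 2 ≤ k) (hl : 1 ≤ l) :
    (tadpole k l).neighborFinset (Sum.inl ⟨0, by omega⟩) =
      {Sum.inl ⟨1, by omega⟩, Sum.inl ⟨k - 1, by omega⟩, Sum.inr ⟨0, by omega⟩} := by
  ext (j | q)
  · simp only [SimpleGraph.mem_neighborFinset, tadpole_adj_inl_inl, add_one_mod_eq_ite j.2,
      Nat.mod_eq_of_lt hk, mem_insert, mem_singleton, Sum.inl.injEq, Fin.ext_iff]
    grind
  · simp [tadpole_adj_inl_inr, Fin.ext_iff]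

lemma neighborFinset_tadpole_inl_succ {i : ℕ} (hi : i + 1 < k) :
    (tadpole k l).neighborFinset (Sum.inl ⟨i + 1, hi⟩) =
      {Sum.inl ⟨i, by omega⟩, Sum.inl ⟨(i + 2) % k, Nat.mod_lt _ (by omega)⟩} := by
  ext (j | q)
  · simp only [SimpleGraph.mem_neighborFinset, tadpole_adj_inl_inl, add_one_mod_eq_ite j.2,
      add_one_mod_eq_ite hi, mem_insert, mem_singleton, Sum.inl.injEq, Fin.ext_iff]
    grind
  · simp [tadpole_adj_inl_inr]

lemma neighborFinset_tadpole_inr_zero (hk : 0 < k) (hl : 1 < l) :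
    (tadpole k l).neighborFinset (Sum.inr ⟨0, by omega⟩) =
      {Sum.inl ⟨0, hk⟩, Sum.inr ⟨1, hl⟩} := by
  ext (j | q)
  · simp [SimpleGraph.adj_comm _ (Sum.inr _), tadpole_adj_inl_inr, Fin.ext_iff]
  · simp [tadpole_adj_inr_inr, Fin.ext_iff, eq_comm]

lemma neighborFinset_tadpole_inr_succ {p : ℕ} (hp : p + 2 < l) :
    (tadpole k l).neighborFinset (Sum.inr ⟨p + 1, by omega⟩) =
      {Sum.inr ⟨p, by omega⟩, Sum.inr ⟨p + 2, hp⟩} := by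
  ext (j | q)
  · simp [SimpleGraph.adj_comm _ (Sum.inr _), tadpole_adj_inl_inr]
  · simp [tadpole_adj_inr_inr, Fin.ext_iff, eq_comm, or_comm]

/-- The hitting time of the far endpoint of the path in `tadpole k l`, in closed form.
A step from distance `d` to distance `d - 1` of the endpoint has `k + l - d` edges behind it and
takes time `2 * (k + l - d) + 1` on average, which sums to `d * (2 * k + 2 * l - d)`; on the cycle
one has to add the gambler's ruin time `i * (k - i)` of reaching the junction from vertex `i`. -/
noncomputable def tadpoleHittingTime (k l : ℕ) : Fin k ⊕ Fin l → ℝ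
  | Sum.inl i => l * (2 * k + l) + i * (k - i)
  | Sum.inr p => (l - 1 - p) * (2 * k + l + 1 + p)

lemma tadpoleHittingTime_nonneg : 0 ≤ tadpoleHittingTime k l := by
  rintro (i | p)
  · have hi : (i : ℝ) ≤ k := by exact_mod_cast i.2.le
    have : 0 ≤ (k : ℝ) - i := sub_nonneg.2 hi
    simp only [Pi.zero_apply, tadpoleHittingTime]
    positivity
  · have hp : (p : ℝ) + 1 ≤ l := by exact_mod_cast p.2
    have : 0 ≤ (l : ℝ) - 1 - p := by linarith
    simp only [Pi.zero_apply, tadpoleHittingTime]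
    positivity

lemma tadpoleHittingTime_inl_mod {i : ℕ} (hk : 0 < k) (hi : i ≤ k) :
    tadpoleHittingTime k l (Sum.inl ⟨i % k, Nat.mod_lt _ hk⟩) =
      l * (2 * k + l) + i * (k - i) := by
  obtain rfl | hi := hi.eq_or_lt
  · simp [tadpoleHittingTime]
  · simp [tadpoleHittingTime, Nat.mod_eq_of_lt hi]

lemma sum_sub_tadpoleHittingTime_eq_degree {v : Fin l} (hk : 3 ≤ k) (hv : (v : ℕ) + 1 = l)
    (u : Fin k ⊕ Fin l) (hu : u ≠ Sum.inr v) :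
    ∑ b ∈ (tadpole k l).neighborFinset u, (tadpoleHittingTime k l u - tadpoleHittingTime k l b) =
      (tadpole k l).degree u := by
  rw [← SimpleGraph.card_neighborFinset_eq_degree]
  rcases u with ⟨_ | i, hi⟩ | ⟨_ | p, hp⟩
  · have hne : 1 ≠ k - 1 := by omega
    rw [neighborFinset_tadpole_inl_zero (by omega) (by omega), sum_insert (by simp [hne]),
      sum_pair (by simp), card_insert_of_notMem (by simp [hne]), card_pair (by simp)]
    simp only [tadpoleHittingTime]
    push_cast [Nat.cast_sub (show 1 ≤ k by omega)]
    ring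
  · have hne : i ≠ (i + 2) % k := by grind [add_one_mod_eq_ite hi]
    rw [neighborFinset_tadpole_inl_succ hi, sum_pair (by simpa using hne),
      card_pair (by simpa using hne), tadpoleHittingTime_inl_mod (by omega) hi]
    simp only [tadpoleHittingTime]
    push_cast
    ring
  · have hl' : 1 < l := by grind
    rw [neighborFinset_tadpole_inr_zero (by omega) hl', sum_pair (by simp), card_pair (by simp)]
    simp only [tadpoleHittingTime]
    push_cast
    ring
  · have hp' : p + 2 < l := by grind
    rw [neighborFinset_tadpole_inr_succ hp', sum_pair (by simp), card_pair (by simp)]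
    simp only [tadpoleHittingTime]
    push_cast
    ring

theorem hittingTime_tadpole {v : Fin l} (hk : 3 ≤ k) (hv : (v : ℕ) + 1 = l) (u : Fin k ⊕ Fin l) :
    hittingTime (tadpole k l) u (Sum.inr v) = tadpoleHittingTime k l u := by
  have hend : tadpoleHittingTime k l (Sum.inr v) = 0 := by
    have : (v : ℝ) + 1 = l := by exact_mod_cast hv
    simp [tadpoleHittingTime, ← this]
  exact hittingTime_eq_of_sum_sub_eq_degree
    (fun u _ ↦ tadpole_degree_pos (by omega) v.pos u) tadpoleHittingTime_nonneg hend
    (sum_sub_tadpoleHittingTime_eq_degree hk hv) u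

end Tadpole

theorem stmt_9 (k l : ℕ) (hk : 3 ≤ k) (hke : Even k) (hl : 1 ≤ l)
    (v : Fin k ⊕ Fin l) (hv : v = Sum.inr ⟨l - 1, by omega⟩)
    (v' : Fin k ⊕ Fin l) (hv' : v' = Sum.inl ⟨k / 2, by omega⟩)
    (j : ℕ) (hj : j ≤ k / 2) :
    hittingTime (tadpole k l) (Sum.inl ⟨(k / 2 + j) % k, Nat.mod_lt _ (by omega)⟩) v =
      hittingTime (tadpole k l) v' v - (j : ℝ) ^ 2 ∧
    hittingTime (tadpole k l) (Sum.inl ⟨(k / 2 + (k - j)) % k, Nat.mod_lt _ (by omega)⟩) v =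
      hittingTime (tadpole k l) v' v - (j : ℝ) ^ 2 := by
  subst hv hv'
  obtain ⟨m, rfl⟩ := hke
  have hm : (m + m) / 2 = m := by omega
  have hreflect : m + (m + m - j) = m - j + (m + m) := by omega
  simp only [hm] at hj ⊢
  have hhit := hittingTime_tadpole (v := ⟨l - 1, by omega⟩) hk (Nat.sub_add_cancel hl)
  simp only [hhit, hreflect, Nat.add_mod_right]
  have hfar : tadpoleHittingTime (m + m) l (Sum.inl ⟨m, by omega⟩) =
      l * (2 * (m + m : ℕ) + l) + (m : ℝ) ^ 2 := by
    rw [tadpoleHittingTime]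
    push_cast
    ring
  rw [hfar, tadpoleHittingTime_inl_mod (by omega) (by omega : m + j ≤ m + m),
    tadpoleHittingTime_inl_mod (by omega) (by omega : m - j ≤ m + m)]
  push_cast [Nat.cast_sub hj]
  constructor <;> ring
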